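/- The inclusion σ(T₁) ∪ σ(T₂) ⊆ σ_ess(T₁ + T₂) holds. -/

import Mathlib

open MeasureTheory Complex

noncomputable section

/-- The measure on `ℝ` given by restricting Lebesgue measure to `[a,b]`. -/
abbrev muI (a b : ℝ) : MeasureTheory.Measure ℝ :=
  MeasureTheory.volume.restrict (Set.Icc a b)

/-- The discrete spectrum of a bounded operator: the set of isolated points of the
spectrum which are eigenvalues of finite multiplicity. -/
def discreteSpectrum {E : Type*} [NormedAddCommGroup E] [NormedSpace ℂ E]
    (T : E →L[ℂ] E) : Set ℂ :=
  {z : ℂ | z ∈ spectrum ℂ T ∧ nhdsWithin z (spectrum ℂ T \ {z}) = ⊥ ∧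
    LinearMap.ker (T - z • (1 : E →L[ℂ] E)).toLinearMap ≠ ⊥ ∧
    FiniteDimensional ℂ ↥(LinearMap.ker (T - z • (1 : E →L[ℂ] E)).toLinearMap)}

/-- The essential spectrum of a bounded operator: the complement of the discrete
spectrum in the spectrum. -/
def essentialSpectrum {E : Type*} [NormedAddCommGroup E] [NormedSpace ℂ E]
    (T : E →L[ℂ] E) : Set ℂ :=
  spectrum ℂ T \ discreteSpectrum T

/-!
On `L²(μ) ⊗ L²(ν)` the operator `T₁` is `∑ k, ⟪φ k, ·⟫ φ k ⊗ M k`, where `M k` is multiplication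
by `h k`; so a nonzero point `z` of its spectrum lies in the spectrum of some `M k`. Since `ν` has
no atoms, `M k - z` is then small on an infinite-dimensional space of functions `g`, namely those
living where `h k` is close to `z`. Imposing in addition that `g` is orthogonal to every `ψ j` costs
finitely many dimensions and makes `T₂` vanish on `φ k ⊗ g`, so `T₁ + T₂ - z` is small on an
infinite-dimensional space. For `z = 0` take instead `u ⊗ g` with `u` orthogonal to every `φ k`,
which `T₁` annihilates too. Such a `z` cannot be an isolated eigenvalue of finite multiplicity of
the normal operator `T₁ + T₂`, because at an isolated point `T₁ + T₂ - z` is left invertible up to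
the projection onto its kernel, an operator of finite rank.
-/

open scoped ENNReal InnerProductSpace Topology

section WeylPoints

section FiniteDimensional

variable {𝕜 E F : Type*} [DivisionRing 𝕜] [AddCommGroup E] [Module 𝕜 E] [AddCommGroup F]
  [Module 𝕜 F] [FiniteDimensional 𝕜 F] {V : Submodule 𝕜 E}

lemma not_finiteDimensional_inf_ker (hV : ¬ FiniteDimensional 𝕜 V) (L : E →ₗ[𝕜] F) :
    ¬ FiniteDimensional 𝕜 ↥(V ⊓ LinearMap.ker L) := by
  rw [← Submodule.fg_iff_finiteDimensional] at hV ⊢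
  exact fun hfg => hV (Submodule.fg_of_fg_map_of_fg_inf_ker L (IsNoetherian.noetherian _) hfg)

lemma exists_mem_ne_zero_of_not_finiteDimensional (hV : ¬ FiniteDimensional 𝕜 V)
    (L : E →ₗ[𝕜] F) : ∃ v ∈ V, L v = 0 ∧ v ≠ 0 := by
  have hne : V ⊓ LinearMap.ker L ≠ ⊥ := fun hbot =>
    not_finiteDimensional_inf_ker hV L (hbot ▸ inferInstance)
  obtain ⟨v, ⟨hvV, hvL⟩, hv⟩ := Submodule.exists_mem_ne_zero_of_ne_bot hne
  exact ⟨v, hvV, hvL, hv⟩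

end FiniteDimensional

variable {E : Type*} [NormedAddCommGroup E] [NormedSpace ℂ E] {T : E →L[ℂ] E} {z : ℂ}

/-- `z` is a *Weyl point* of `T` if for every `ε > 0` the inequality `‖T v - z v‖ ≤ ε ‖v‖` holds
on an infinite-dimensional subspace. This is Weyl's criterion for the essential spectrum, with
infinite-dimensional subspaces in the place of singular sequences. -/
def IsWeylPoint (T : E →L[ℂ] E) (z : ℂ) : Prop :=
  ∀ ε > (0 : ℝ), ∃ V : Submodule ℂ E, ¬ FiniteDimensional ℂ V ∧
    ∀ v ∈ V, ‖T v - z • v‖ ≤ ε * ‖v‖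

lemma isWeylPoint_zero (hE : ¬ FiniteDimensional ℂ E) :
    IsWeylPoint (0 : E →L[ℂ] E) 0 := fun ε hε =>
  ⟨⊤, fun h => hE (Submodule.topEquiv.finiteDimensional), fun v _ => by
    simpa using mul_nonneg hε.le (norm_nonneg v)⟩

lemma IsWeylPoint.mul_ne_one_sub (hT : IsWeylPoint T z) (S P : E →L[ℂ] E)
    [FiniteDimensional ℂ (LinearMap.range P.toLinearMap)] : S * (T - z • 1) ≠ 1 - P := by
  intro hSP
  obtain ⟨V, hV, hTV⟩ := hT (1 / (‖S‖ + 1)) (by positivity)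
  obtain ⟨v, hvV, hPv, hv⟩ :=
    exists_mem_ne_zero_of_not_finiteDimensional hV P.toLinearMap.rangeRestrict
  have hPv : P v = 0 := congrArg Subtype.val hPv
  have hSv : S (T v - z • v) = v := by simpa [hPv] using congr($hSP v)
  have hlt : ‖S‖ * (1 / (‖S‖ + 1)) < 1 := by
    rw [mul_one_div, div_lt_one (by positivity)]
    exact lt_add_one _
  have hle : ‖v‖ ≤ ‖S‖ * (1 / (‖S‖ + 1)) * ‖v‖ := calc
    ‖v‖ = ‖S (T v - z • v)‖ := by rw [hSv]
    _ ≤ ‖S‖ * ‖T v - z • v‖ := S.le_opNorm _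
    _ ≤ ‖S‖ * (1 / (‖S‖ + 1) * ‖v‖) := by gcongr; exact hTV v hvV
    _ = ‖S‖ * (1 / (‖S‖ + 1)) * ‖v‖ := (mul_assoc _ _ _).symm
  exact hle.not_gt (mul_lt_of_lt_one_left (norm_pos_iff.2 hv) hlt)

lemma IsWeylPoint.mem_spectrum (hT : IsWeylPoint T z) : z ∈ spectrum ℂ T := by
  intro hz
  obtain ⟨S, hS⟩ := IsUnit.exists_left_inv hz
  have : FiniteDimensional ℂ (LinearMap.range (0 : E →L[ℂ] E).toLinearMap) := by
    rw [ContinuousLinearMap.toLinearMap_zero, LinearMap.range_zero]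
    infer_instance
  refine hT.mul_ne_one_sub (-S) 0 ?_
  rw [neg_mul, ← mul_neg, neg_sub, ← Algebra.algebraMap_eq_smul_one, hS, sub_zero]

lemma continuousOn_of_continuousOn_compl_singleton {X Y : Type*} [TopologicalSpace X] [T1Space X]
    [TopologicalSpace Y] {f : X → Y} {s : Set X} {x : X} (hf : ContinuousOn f {x}ᶜ)
    (hx : 𝓝[s \ {x}] x = ⊥) : ContinuousOn f s := by
  intro y _
  rcases eq_or_ne y x with rfl | hy
  · rw [← continuousWithinAt_sdiff_self, ContinuousWithinAt, hx]
    exact Filter.tendsto_bot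
  · exact (hf.continuousAt (isOpen_compl_singleton.mem_nhds hy)).continuousWithinAt

/- `s` and `p` are the values of the functional calculus at `w ↦ (w - z)⁻¹` (with junk value `0` at
`z`) and at the indicator of `{z}`; both are continuous on the spectrum because `z` is isolated in
it. -/
lemma exists_mul_sub_eq_one_sub_of_isolated {A : Type*} [CStarAlgebra A] (a : A) [IsStarNormal a]
    (hz : 𝓝[spectrum ℂ a \ {z}] z = ⊥) :
    ∃ s p : A, s * (a - z • 1) = 1 - p ∧ (a - z • 1) * p = 0 := by
  have hsub : ContinuousOn (fun w : ℂ => w - z) (spectrum ℂ a) := by fun_prop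
  have hinv : ContinuousOn (fun w : ℂ => (w - z)⁻¹) (spectrum ℂ a) :=
    continuousOn_of_continuousOn_compl_singleton
      (ContinuousOn.inv₀ (by fun_prop) fun _ => sub_ne_zero.2) hz
  have hind : ContinuousOn (Set.indicator {z} (1 : ℂ → ℂ)) (spectrum ℂ a) :=
    continuousOn_of_continuousOn_compl_singleton
      (continuousOn_const.congr fun _ hw => Set.indicator_of_notMem hw 1) hz
  have ha : a - z • 1 = cfc (fun w : ℂ => w - z) a := by
    rw [cfc_sub (fun w : ℂ => w) (fun _ => z) a, cfc_id' ℂ a, cfc_const z a,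
      Algebra.algebraMap_eq_smul_one]
  refine ⟨cfc (fun w => (w - z)⁻¹) a, cfc (Set.indicator {z} (1 : ℂ → ℂ)) a, ?_, ?_⟩
  · rw [ha, ← cfc_mul _ _ a hinv hsub, ← cfc_one ℂ a, ← cfc_sub _ _ a (by fun_prop) hind]
    congr with w
    rcases eq_or_ne w z with rfl | hw
    · simp
    · simp [hw, sub_ne_zero.2 hw]
  · rw [ha, ← cfc_mul _ _ a hsub hind, ← cfc_zero ℂ a]
    congr with w
    rcases eq_or_ne w z with rfl | hw
    · simp
    · simp [hw]

theorem IsWeylPoint.mem_essentialSpectrum {H : Type*} [NormedAddCommGroup H]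
    [InnerProductSpace ℂ H] [CompleteSpace H] {T : H →L[ℂ] H} [IsStarNormal T]
    (hT : IsWeylPoint T z) : z ∈ essentialSpectrum T := by
  refine ⟨hT.mem_spectrum, ?_⟩
  rintro ⟨-, hisolated, -, hfinite⟩
  obtain ⟨S, P, hSP, hP⟩ := exists_mul_sub_eq_one_sub_of_isolated T hisolated
  have hrange : LinearMap.range P.toLinearMap ≤
      LinearMap.ker (T - z • (1 : H →L[ℂ] H)).toLinearMap := by
    rintro _ ⟨v, rfl⟩
    exact congr($hP v)
  have := Submodule.finiteDimensional_of_le hrange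
  exact hT.mul_ne_one_sub S P hSP

end WeylPoints

section Resolvent

variable {𝕜 E F ι : Type*} [NontriviallyNormedField 𝕜] [NormedAddCommGroup E] [NormedSpace 𝕜 E]
  [NormedAddCommGroup F] [NormedSpace 𝕜 F] [Fintype ι] [DecidableEq ι]

/- Off `0` and the spectra of the `M k`, the resolvent of the sum is
`∑ k, J k (z - M k)⁻¹ (L k) + z⁻¹ (1 - ∑ k, J k (L k))`. -/
lemma spectrum_sum_comp_subset {J : ι → F →L[𝕜] E} {L : ι → E →L[𝕜] F}
    (hLJ : ∀ k l y, L k (J l y) = if k = l then y else 0) (M : ι → F →L[𝕜] F) :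
    spectrum 𝕜 (∑ k, J k ∘L M k ∘L L k) ⊆ insert 0 (⋃ k, spectrum 𝕜 (M k)) := by
  intro z hz
  contrapose! hz
  simp only [Set.mem_insert_iff, Set.mem_iUnion, not_or, not_exists, spectrum.notMem_iff,
    isUnit_iff_exists] at hz ⊢
  obtain ⟨hz0, hunit⟩ := hz
  choose R hR hR' using hunit
  have hMR (k : ι) (y : F) : M k (R k y) = z • R k y - y := by
    rw [← sub_sub_self (z • R k y) (M k (R k y))]
    congr 1
    simpa [Algebra.algebraMap_eq_smul_one] using congr($(hR k) y)
  have hRM (k : ι) (y : F) : R k (M k y) = z • R k y - y := by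
    rw [← sub_sub_self (z • R k y) (R k (M k y))]
    congr 1
    simpa [Algebra.algebraMap_eq_smul_one] using congr($(hR' k) y)
  refine ⟨∑ k, J k ∘L R k ∘L L k + z⁻¹ • (1 - ∑ k, J k ∘L L k), ?_, ?_⟩ <;> ext x <;>
    simp [Algebra.algebraMap_eq_smul_one, hLJ, hMR, hRM, hz0, smul_sub, Finset.smul_sum,
      Finset.sum_sub_distrib, smul_smul]

end Resolvent

section HilbertTensor

lemma norm_eq_mul_of_inner_self_eq_mul {𝕜 E F G : Type*} [RCLike 𝕜]
    [NormedAddCommGroup E] [InnerProductSpace 𝕜 E] [NormedAddCommGroup F] [InnerProductSpace 𝕜 F]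
    [NormedAddCommGroup G] [InnerProductSpace 𝕜 G] {x : E} {y : F} {z : G}
    (hxyz : ⟪z, z⟫_𝕜 = ⟪x, x⟫_𝕜 * ⟪y, y⟫_𝕜) : ‖z‖ = ‖x‖ * ‖y‖ := by
  simp only [inner_self_eq_norm_sq_to_K] at hxyz
  norm_cast at hxyz
  rwa [← mul_pow, pow_left_inj₀ (norm_nonneg z) (by positivity) two_ne_zero] at hxyz

variable {K₁ K₂ H ι κ : Type*} [NormedAddCommGroup K₁] [InnerProductSpace ℂ K₁]
  [NormedAddCommGroup K₂] [InnerProductSpace ℂ K₂]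
  [NormedAddCommGroup H] [InnerProductSpace ℂ H] [Fintype ι] [Fintype κ]

/-- `τ` exhibits `H` as the completed tensor product of `K₁` and `K₂`, with `τ u g` in the role
of the elementary tensor `u ⊗ g`. -/
structure IsHilbertTensor (τ : K₁ →L[ℂ] K₂ →L[ℂ] H) : Prop where
  inner_apply : ∀ u g u' g', ⟪τ u g, τ u' g'⟫_ℂ = ⟪u, u'⟫_ℂ * ⟪g, g'⟫_ℂ
  dense_span : Dense (Submodule.span ℂ (Set.range fun q : K₁ × K₂ => τ q.1 q.2) : Set H)

/-- The abstract form of a partial integral operator with degenerate kernel: `T` is the operator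
`∑ k, ⟪φ k, ·⟫ φ k ⊗ M k`, given by its values on the elementary tensors `τ u g`. -/
def IsPartialIntegralOperator (τ : K₁ →L[ℂ] K₂ →L[ℂ] H) (φ : ι → K₁) (M : ι → K₂ →L[ℂ] K₂)
    (T : H →L[ℂ] H) : Prop :=
  ∀ u g, T (τ u g) = ∑ k, ⟪φ k, u⟫_ℂ • τ (φ k) (M k g)

variable {τ : K₁ →L[ℂ] K₂ →L[ℂ] H} {φ : ι → K₁} {ψ : κ → K₂} {M : ι → K₂ →L[ℂ] K₂}
  {N : κ → K₁ →L[ℂ] K₁} {T T₁ T₂ : H →L[ℂ] H} {z : ℂ}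

namespace IsHilbertTensor

lemma flip (hτ : IsHilbertTensor τ) : IsHilbertTensor τ.flip where
  inner_apply g u g' u' := by
    simp only [ContinuousLinearMap.flip_apply, hτ.inner_apply, mul_comm]
  dense_span := by
    convert hτ.dense_span using 3
    exact (Equiv.prodComm K₂ K₁).surjective.range_comp fun q : K₁ × K₂ => τ q.1 q.2

lemma norm_apply (hτ : IsHilbertTensor τ) (u : K₁) (g : K₂) : ‖τ u g‖ = ‖u‖ * ‖g‖ :=
  norm_eq_mul_of_inner_self_eq_mul (hτ.inner_apply u g u g)

lemma injective_apply (hτ : IsHilbertTensor τ) {u : K₁} (hu : u ≠ 0) :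
    Function.Injective (τ u) := by
  refine (injective_iff_map_eq_zero _).2 fun g hg => ?_
  simpa [hg, hu] using hτ.norm_apply u g

lemma adjoint_apply_apply [CompleteSpace K₂] [CompleteSpace H] (hτ : IsHilbertTensor τ)
    (u u' : K₁) (g : K₂) : (τ u).adjoint (τ u' g) = ⟪u, u'⟫_ℂ • g := by
  refine ext_inner_left ℂ fun v => ?_
  rw [ContinuousLinearMap.adjoint_inner_right, hτ.inner_apply, inner_smul_right]

lemma isWeylPoint_add (hτ : IsHilbertTensor τ) {u : K₁} (hu : u ≠ 0) {A : K₂ →L[ℂ] K₂}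
    (hT₁ : ∀ g, T₁ (τ u g) = τ u (A g)) (hT₂ : IsPartialIntegralOperator τ.flip ψ N T₂)
    (hA : IsWeylPoint A z) : IsWeylPoint (T₁ + T₂) z := by
  intro ε hε
  obtain ⟨V, hV, hAV⟩ := hA ε hε
  let L : K₂ →ₗ[ℂ] κ → ℂ := LinearMap.pi fun j => (innerSL ℂ (ψ j)).toLinearMap
  refine ⟨(V ⊓ LinearMap.ker L).map (τ u).toLinearMap, fun hfinite => ?_, ?_⟩
  · refine not_finiteDimensional_inf_ker hV L ?_
    exact (Submodule.equivMapOfInjective _ (hτ.injective_apply hu) _).symm.finiteDimensional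
  · rintro _ ⟨g, ⟨hgV, hgL⟩, rfl⟩
    have hT₂g : T₂ (τ u g) = 0 := by
      have hψg (j : κ) : ⟪ψ j, g⟫_ℂ = 0 := congrFun (LinearMap.mem_ker.1 hgL) j
      simpa [hψg] using hT₂ g u
    calc ‖(T₁ + T₂) (τ u g) - z • τ u g‖ = ‖u‖ * ‖A g - z • g‖ := by
          rw [add_apply, hT₂g, add_zero, hT₁, ← map_smul, ← map_sub, hτ.norm_apply]
      _ ≤ ‖u‖ * (ε * ‖g‖) := by gcongr; exact hAV g hgV
      _ = ε * ‖τ u g‖ := by rw [hτ.norm_apply, mul_left_comm]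

end IsHilbertTensor

namespace IsPartialIntegralOperator

lemma apply_apply_of_orthonormal (hT : IsPartialIntegralOperator τ φ M T) (hφ : Orthonormal ℂ φ)
    (k : ι) (g : K₂) : T (τ (φ k) g) = τ (φ k) (M k g) := by
  classical
  simp [hT (φ k) g, orthonormal_iff_ite.1 hφ]

lemma eq_sum_comp_adjoint [CompleteSpace K₂] [CompleteSpace H]
    (hT : IsPartialIntegralOperator τ φ M T) (hτ : IsHilbertTensor τ) :
    T = ∑ k, τ (φ k) ∘L M k ∘L (τ (φ k)).adjoint := by
  refine ContinuousLinearMap.ext_on hτ.dense_span ?_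
  rintro _ ⟨⟨u, g⟩, rfl⟩
  simp [hT u g, hτ.adjoint_apply_apply]

lemma spectrum_subset [CompleteSpace K₂] [CompleteSpace H]
    (hT : IsPartialIntegralOperator τ φ M T) (hτ : IsHilbertTensor τ) (hφ : Orthonormal ℂ φ) :
    spectrum ℂ T ⊆ insert 0 (⋃ k, spectrum ℂ (M k)) := by
  classical
  rw [hT.eq_sum_comp_adjoint hτ]
  refine spectrum_sum_comp_subset (fun k l g => ?_) M
  rw [hτ.adjoint_apply_apply, orthonormal_iff_ite.1 hφ, ite_smul, one_smul, zero_smul]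

lemma isWeylPoint_zero_add (hT₁ : IsPartialIntegralOperator τ φ M T₁) (hτ : IsHilbertTensor τ)
    (hT₂ : IsPartialIntegralOperator τ.flip ψ N T₂)
    (hK₁ : ¬ FiniteDimensional ℂ K₁) (hK₂ : ¬ FiniteDimensional ℂ K₂) :
    IsWeylPoint (T₁ + T₂) 0 := by
  let L : K₁ →ₗ[ℂ] ι → ℂ := LinearMap.pi fun k => (innerSL ℂ (φ k)).toLinearMap
  obtain ⟨u, -, huL, hu⟩ := exists_mem_ne_zero_of_not_finiteDimensional
    (V := ⊤) (fun h => hK₁ Submodule.topEquiv.finiteDimensional) L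
  have hφu (k : ι) : ⟪φ k, u⟫_ℂ = 0 := congrFun huL k
  exact hτ.isWeylPoint_add hu (fun g => by simp [hT₁ u g, hφu]) hT₂ (isWeylPoint_zero hK₂)

theorem spectrum_subset_essentialSpectrum_add [CompleteSpace K₂] [CompleteSpace H]
    (hT₁ : IsPartialIntegralOperator τ φ M T₁) (hτ : IsHilbertTensor τ) (hφ : Orthonormal ℂ φ)
    (hT₂ : IsPartialIntegralOperator τ.flip ψ N T₂) [IsStarNormal (T₁ + T₂)]
    (hK₁ : ¬ FiniteDimensional ℂ K₁) (hK₂ : ¬ FiniteDimensional ℂ K₂)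
    (hM : ∀ k, ∀ z ∈ spectrum ℂ (M k), IsWeylPoint (M k) z) :
    spectrum ℂ T₁ ⊆ essentialSpectrum (T₁ + T₂) := by
  intro z hz
  apply IsWeylPoint.mem_essentialSpectrum
  rcases hT₁.spectrum_subset hτ hφ hz with rfl | hz
  · exact hT₁.isWeylPoint_zero_add hτ hT₂ hK₁ hK₂
  · obtain ⟨k, hzk⟩ := Set.mem_iUnion.1 hz
    exact hτ.isWeylPoint_add (hφ.ne_zero k) (hT₁.apply_apply_of_orthonormal hφ k) hT₂ (hM k z hzk)

end IsPartialIntegralOperator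

end HilbertTensor

section Multiplication

lemma eq_bot_of_forall_apply_eq_smul {𝕜 E : Type*} [Field 𝕜] [IsAlgClosed 𝕜] [AddCommGroup E]
    [Module 𝕜 E] {f : Module.End 𝕜 E} (hf : ∀ (c : 𝕜) (v : E), f v = c • v → v = 0)
    {V : Submodule 𝕜 E} [FiniteDimensional 𝕜 V] (hV : ∀ v ∈ V, f v ∈ V) : V = ⊥ := by
  by_contra hbot
  have := Submodule.nontrivial_iff_ne_bot.2 hbot
  obtain ⟨c, hc⟩ := Module.End.exists_eigenvalue (f.restrict hV)
  obtain ⟨v, hv⟩ := hc.exists_hasEigenvector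
  exact hv.2 (Subtype.ext (hf c v (congrArg Subtype.val hv.apply_eq_smul)))

variable {α : Type*} [MeasurableSpace α] {μ : Measure α} {p : ℝ≥0∞} [Fact (1 ≤ p)]

variable (p) in
/-- The operator of multiplication by the essentially bounded function `h` on `Lᵖ`. -/
def mulCLM (h : Lp ℂ ∞ μ) : Lp ℂ p μ →L[ℂ] Lp ℂ p μ :=
  (ContinuousLinearMap.mul ℂ ℂ).holderL μ ∞ p p h

lemma coeFn_mulCLM (h : Lp ℂ ∞ μ) (g : Lp ℂ p μ) : mulCLM p h g =ᵐ[μ] fun x => h x * g x :=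
  (ContinuousLinearMap.mul ℂ ℂ).coeFn_holder h g

lemma coeFn_mulCLM_toLp {h : α → ℂ} (hh : MemLp h ∞ μ) (g : Lp ℂ p μ) :
    mulCLM p hh.toLp g =ᵐ[μ] fun x => h x * g x := by
  filter_upwards [coeFn_mulCLM hh.toLp g, hh.coeFn_toLp] with x h₁ h₂
  rw [h₁, h₂]

lemma isUnit_mulCLM {h : Lp ℂ ∞ μ} {ε : ℝ} (hε : 0 < ε) (hhε : ∀ᵐ x ∂μ, ε ≤ ‖h x‖) :
    IsUnit (mulCLM p h) := by
  have hinv : MemLp (fun x => (h x)⁻¹) ∞ μ := by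
    refine memLp_top_of_bound (Lp.aestronglyMeasurable h).inv₀ ε⁻¹ ?_
    filter_upwards [hhε] with x hx
    rw [norm_inv]
    exact inv_anti₀ hε hx
  refine isUnit_iff_exists.2 ⟨mulCLM p hinv.toLp, ?_, ?_⟩ <;> ext1 g <;> apply Lp.ext
  · filter_upwards [coeFn_mulCLM h (mulCLM p hinv.toLp g), coeFn_mulCLM_toLp hinv g, hhε]
      with x h₁ h₂ hx
    simp [h₁, h₂, mul_inv_cancel_left₀ (norm_pos_iff.1 (hε.trans_le hx))]
  · filter_upwards [coeFn_mulCLM_toLp hinv (mulCLM p h g), coeFn_mulCLM h g, hhε]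
      with x h₁ h₂ hx
    simp [h₁, h₂, inv_mul_cancel_left₀ (norm_pos_iff.1 (hε.trans_le hx))]

lemma smul_one_sub_mulCLM (h : Lp ℂ ∞ μ) (z : ℂ) :
    z • 1 - mulCLM p h = mulCLM p ((memLp_top_const z).toLp - h) := by
  ext1 g
  apply Lp.ext
  have hz := (memLp_top_const (μ := μ) z).coeFn_toLp
  filter_upwards [Lp.coeFn_sub (z • g) (mulCLM p h g), Lp.coeFn_smul z g, coeFn_mulCLM h g,
    coeFn_mulCLM ((memLp_top_const z).toLp - h) g, Lp.coeFn_sub (memLp_top_const z).toLp h, hz]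
    with x h₁ h₂ h₃ h₄ h₅ h₆
  change (z • g - mulCLM p h g : Lp ℂ p μ) x = mulCLM p ((memLp_top_const z).toLp - h) g x
  rw [h₁, h₄, Pi.sub_apply, h₂, h₃, h₅, Pi.sub_apply, h₆, Pi.smul_apply, smul_eq_mul, sub_mul]

lemma measure_norm_sub_lt_ne_zero_of_mem_spectrum_mulCLM {h : Lp ℂ ∞ μ} {z : ℂ}
    (hz : z ∈ spectrum ℂ (mulCLM p h)) {ε : ℝ} (hε : 0 < ε) : μ {x | ‖z - h x‖ < ε} ≠ 0 := by
  intro hzero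
  apply hz
  change IsUnit (algebraMap ℂ _ z - mulCLM p h)
  rw [Algebra.algebraMap_eq_smul_one, smul_one_sub_mulCLM]
  refine isUnit_mulCLM hε ?_
  filter_upwards [Lp.coeFn_sub (memLp_top_const z).toLp h, (memLp_top_const z).coeFn_toLp,
    measure_eq_zero_iff_ae_notMem.1 hzero] with x h₁ h₂ h₃
  rw [h₁, Pi.sub_apply, h₂]
  exact not_lt.1 h₃

lemma eq_zero_of_mulCLM_eq_smul {h : Lp ℂ ∞ μ} {c : ℂ} (hc : ∀ᵐ x ∂μ, h x ≠ c) {g : Lp ℂ p μ}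
    (hg : mulCLM p h g = c • g) : g = 0 := by
  rw [Lp.eq_zero_iff_ae_eq_zero]
  have hmul := coeFn_mulCLM h g
  rw [hg] at hmul
  filter_upwards [hmul, Lp.coeFn_smul c g, hc] with x h₁ h₂ h₃
  by_contra hgx
  rw [h₂] at h₁
  exact h₃ (mul_right_cancel₀ hgx h₁).symm

variable (μ) in
lemma exists_Linfty_forall_ae_ne [MeasurableSpace.CountablySeparated α] [NullSingletonClass μ] :
    ∃ h : Lp ℂ ∞ μ, ∀ c : ℂ, ∀ᵐ x ∂μ, h x ≠ c := by
  obtain ⟨f, hf, hf_inj⟩ := MeasurableSpace.measurable_injection_nat_bool_of_countablySeparated α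
  let F : α → ℂ := fun x => Real.arctan (embeddingReal (ℕ → Bool) (f x))
  have hF : Measurable F := by
    have := (measurable_embeddingReal (ℕ → Bool)).comp hf
    fun_prop
  have hF_inj : Function.Injective F := Complex.ofReal_injective.comp <|
    Real.arctan_injective.comp <| (measurableEmbedding_embeddingReal _).injective.comp hf_inj
  have hF_mem : MemLp F ∞ μ := by
    refine memLp_top_of_bound hF.aestronglyMeasurable (Real.pi / 2) (.of_forall fun x => ?_)
    rw [Complex.norm_real, Real.norm_eq_abs, abs_le]
    exact ⟨(Real.neg_pi_div_two_lt_arctan _).le, (Real.arctan_lt_pi_div_two _).le⟩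
  refine ⟨hF_mem.toLp, fun c => ?_⟩
  have hlevel : ∀ᵐ x ∂μ, F x ≠ c :=
    measure_eq_zero_iff_ae_notMem.1 ((Set.subsingleton_singleton.preimage hF_inj).measure_zero μ)
  filter_upwards [hF_mem.coeFn_toLp, hlevel] with x h₁ h₂
  rwa [h₁]

variable (μ p) in
/-- The subspace of the functions in `Lᵖ(μ)` which vanish almost everywhere outside of `S`. -/
def lpSupportedOn (S : Set α) : Submodule ℂ (Lp ℂ p μ) :=
  LinearMap.ker (LpToLpRestrictCLM α ℂ ℂ μ p Sᶜ).toLinearMap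

lemma mem_lpSupportedOn {S : Set α} (hS : MeasurableSet S) {g : Lp ℂ p μ} :
    g ∈ lpSupportedOn μ p S ↔ ∀ᵐ x ∂μ, x ∉ S → g x = 0 := by
  rw [lpSupportedOn, LinearMap.mem_ker, ContinuousLinearMap.coe_coe, Lp.eq_zero_iff_ae_eq_zero,
    (LpToLpRestrictCLM_coeFn ℂ Sᶜ g).congr_left, Filter.EventuallyEq, ae_restrict_iff' hS.compl]
  rfl

/- Multiplication by a bounded injective function preserves `lpSupportedOn μ p S` but has no
eigenvalues. -/
lemma not_finiteDimensional_lpSupportedOn [MeasurableSpace.CountablySeparated α]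
    [NullSingletonClass μ] [SigmaFinite μ] {S : Set α} (hS : MeasurableSet S) (hμS : μ S ≠ 0) :
    ¬ FiniteDimensional ℂ (lpSupportedOn μ p S) := by
  intro hfinite
  obtain ⟨h, hh⟩ := exists_Linfty_forall_ae_ne μ
  have hbot : lpSupportedOn μ p S = ⊥ := by
    refine eq_bot_of_forall_apply_eq_smul (f := (mulCLM p h).toLinearMap)
      (fun c g => eq_zero_of_mulCLM_eq_smul (hh c)) fun g hg => ?_
    rw [mem_lpSupportedOn hS] at hg ⊢
    filter_upwards [hg, coeFn_mulCLM h g] with x hgx hhx hxS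
    exact hhx.trans (by rw [hgx hxS, mul_zero])
  obtain ⟨t, ht, htS, hμt, hμt_top⟩ :=
    Measure.exists_subset_measure_lt_top hS (pos_iff_ne_zero.2 hμS)
  have hmem : indicatorConstLp p ht hμt_top.ne (1 : ℂ) ∈ lpSupportedOn μ p S := by
    rw [mem_lpSupportedOn hS]
    filter_upwards [indicatorConstLp_coeFn_notMem (E := ℂ)] with x hx hxS
    exact hx fun hxt => hxS (htS hxt)
  rw [hbot, Submodule.mem_bot, Lp.eq_zero_iff_ae_eq_zero] at hmem
  refine hμt.ne' (measure_eq_zero_iff_ae_notMem.2 ?_)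
  filter_upwards [hmem, indicatorConstLp_coeFn_mem (E := ℂ) (hs := ht)] with x h₁ h₂ hxt
  exact one_ne_zero ((h₂ hxt).symm.trans h₁)

lemma not_finiteDimensional_Lp [MeasurableSpace.CountablySeparated α] [NullSingletonClass μ]
    [SigmaFinite μ] [NeZero μ] : ¬ FiniteDimensional ℂ (Lp ℂ p μ) := fun _ =>
  not_finiteDimensional_lpSupportedOn (p := p) MeasurableSet.univ
    (NeZero.ne (μ Set.univ)) inferInstance

theorem isWeylPoint_mulCLM [MeasurableSpace.CountablySeparated α] [NullSingletonClass μ]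
    [SigmaFinite μ] {h : Lp ℂ ∞ μ} {z : ℂ} (hz : z ∈ spectrum ℂ (mulCLM p h)) :
    IsWeylPoint (mulCLM p h) z := by
  intro ε hε
  have hS : MeasurableSet {x | ‖z - h x‖ < ε} :=
    measurableSet_lt ((Lp.stronglyMeasurable h).measurable.const_sub z).norm measurable_const
  refine ⟨lpSupportedOn μ p {x | ‖z - h x‖ < ε}, not_finiteDimensional_lpSupportedOn hS
    (measure_norm_sub_lt_ne_zero_of_mem_spectrum_mulCLM hz hε), fun g hg => ?_⟩
  rw [mem_lpSupportedOn hS] at hg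
  apply Lp.norm_le_mul_norm_of_ae_le_mul
  filter_upwards [hg, Lp.coeFn_sub (mulCLM p h g) (z • g), Lp.coeFn_smul z g, coeFn_mulCLM h g]
    with x hgx h₁ h₂ h₃
  have hmul : (mulCLM p h g - z • g : Lp ℂ p μ) x = (h x - z) * g x := by
    rw [h₁, Pi.sub_apply, h₂, h₃, Pi.smul_apply, smul_eq_mul, sub_mul]
  rw [hmul, norm_mul, norm_sub_rev]
  by_cases hx : ‖z - h x‖ < ε
  · gcongr
  · simp [hgx hx]

end Multiplication

section TensorLp

variable {α β : Type*} [MeasurableSpace α] [MeasurableSpace β] {μ : Measure α} {ν : Measure β}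

lemma memLp_two_mul_prod [SFinite μ] [SFinite ν] {𝕜 : Type*} [RCLike 𝕜] {u : α → 𝕜} {g : β → 𝕜}
    (hu : MemLp u 2 μ) (hg : MemLp g 2 ν) :
    MemLp (fun z : α × β => u z.1 * g z.2) 2 (μ.prod ν) := by
  refine (memLp_two_iff_integrable_sq_norm (hu.1.comp_fst.mul hg.1.comp_snd)).2 ?_
  simpa only [Pi.mul_apply, norm_mul, mul_pow] using
    ((memLp_two_iff_integrable_sq_norm hu.1).1 hu).mul_prod
      ((memLp_two_iff_integrable_sq_norm hg.1).1 hg)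

lemma inner_eq_mul_of_ae_eq_mul_prod [SFinite μ] [SFinite ν] {u u' : Lp ℂ 2 μ} {g g' : Lp ℂ 2 ν}
    {f f' : Lp ℂ 2 (μ.prod ν)} (hf : f =ᵐ[μ.prod ν] fun z => u z.1 * g z.2)
    (hf' : f' =ᵐ[μ.prod ν] fun z => u' z.1 * g' z.2) :
    ⟪f, f'⟫_ℂ = ⟪u, u'⟫_ℂ * ⟪g, g'⟫_ℂ := by
  rw [L2.inner_def, L2.inner_def, L2.inner_def, ← integral_prod_mul]
  apply integral_congr_ae
  filter_upwards [hf, hf'] with z h₁ h₂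
  rw [h₁, h₂]
  simp only [RCLike.inner_apply, map_mul]
  ring

variable (μ ν) in
/-- The elementary tensor `u ⊗ g` of two square integrable functions, realized as the function
`(x, y) ↦ u x * g y`. -/
def tensorLp [SFinite μ] [SFinite ν] :
    Lp ℂ 2 μ →L[ℂ] Lp ℂ 2 ν →L[ℂ] Lp ℂ 2 (μ.prod ν) :=
  let t (u : Lp ℂ 2 μ) (g : Lp ℂ 2 ν) : Lp ℂ 2 (μ.prod ν) :=
    (memLp_two_mul_prod (Lp.memLp u) (Lp.memLp g)).toLp
  have ht (u : Lp ℂ 2 μ) (g : Lp ℂ 2 ν) :=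
    (memLp_two_mul_prod (Lp.memLp u) (Lp.memLp g)).coeFn_toLp
  LinearMap.mkContinuous₂
    (LinearMap.mk₂ ℂ t
      (fun u u' g => Lp.ext <| by
        filter_upwards [ht (u + u') g, ht u g, ht u' g, Lp.coeFn_add (t _ _) (t _ _),
          Measure.quasiMeasurePreserving_fst.ae (Lp.coeFn_add u u')] with z h₁ h₂ h₃ h₄ h₅
        rw [h₁, h₄, h₅, Pi.add_apply, Pi.add_apply, h₂, h₃, add_mul])
      (fun c u g => Lp.ext <| by
        filter_upwards [ht (c • u) g, ht u g, Lp.coeFn_smul c (t _ _),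
          Measure.quasiMeasurePreserving_fst.ae (Lp.coeFn_smul c u)] with z h₁ h₂ h₃ h₄
        rw [h₁, h₃, h₄, Pi.smul_apply, Pi.smul_apply, h₂, smul_mul_assoc])
      (fun u g g' => Lp.ext <| by
        filter_upwards [ht u (g + g'), ht u g, ht u g', Lp.coeFn_add (t _ _) (t _ _),
          Measure.quasiMeasurePreserving_snd.ae (Lp.coeFn_add g g')] with z h₁ h₂ h₃ h₄ h₅
        rw [h₁, h₄, h₅, Pi.add_apply, Pi.add_apply, h₂, h₃, mul_add])
      (fun c u g => Lp.ext <| by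
        filter_upwards [ht u (c • g), ht u g, Lp.coeFn_smul c (t _ _),
          Measure.quasiMeasurePreserving_snd.ae (Lp.coeFn_smul c g)] with z h₁ h₂ h₃ h₄
        rw [h₁, h₃, h₄, Pi.smul_apply, Pi.smul_apply, h₂, mul_smul_comm]))
    1 fun u g => by
      rw [one_mul]
      exact (norm_eq_mul_of_inner_self_eq_mul
        (inner_eq_mul_of_ae_eq_mul_prod (ht u g) (ht u g))).le

lemma coeFn_tensorLp [SFinite μ] [SFinite ν] (u : Lp ℂ 2 μ) (g : Lp ℂ 2 ν) :
    tensorLp μ ν u g =ᵐ[μ.prod ν] fun z => u z.1 * g z.2 :=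
  (memLp_two_mul_prod (Lp.memLp u) (Lp.memLp g)).coeFn_toLp

lemma coeFn_sum_smul_tensorLp [SFinite μ] [SFinite ν] {ι : Type*} [Fintype ι] (c : ι → ℂ)
    (u : ι → Lp ℂ 2 μ) (g : ι → Lp ℂ 2 ν) :
    (∑ k, c k • tensorLp μ ν (u k) (g k) : Lp ℂ 2 (μ.prod ν)) =ᵐ[μ.prod ν]
      fun z => ∑ k, c k * (u k z.1 * g k z.2) := by
  filter_upwards [Lp.coeFn_finsetSum Finset.univ fun k => c k • tensorLp μ ν (u k) (g k),
    ae_all_iff.2 fun k => Lp.coeFn_smul (c k) (tensorLp μ ν (u k) (g k)),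
    ae_all_iff.2 fun k => coeFn_tensorLp (u k) (g k)] with z h₁ h₂ h₃
  simp only [h₁, Finset.sum_apply, h₂, Pi.smul_apply, h₃, smul_eq_mul]

lemma ae_eq_zero_of_forall_setIntegral_prod_eq_zero {E : Type*} [NormedAddCommGroup E]
    [NormedSpace ℝ E] [CompleteSpace E] {ρ : Measure (α × β)} {f : α × β → E}
    (hf : Integrable f ρ) (hzero : ∀ s t, MeasurableSet s → MeasurableSet t →
      ∫ z in s ×ˢ t, f z ∂ρ = 0) : f =ᵐ[ρ] 0 := by
  suffices h : ∀ S, MeasurableSet S → ∫ z in S, f z ∂ρ = 0 from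
    hf.ae_eq_zero_of_forall_setIntegral_eq_zero fun S hS _ => h S hS
  intro S hS
  induction S, hS using MeasurableSpace.induction_on_inter generateFrom_prod.symm isPiSystem_prod
    with
  | empty => simp
  | basic S hS =>
    obtain ⟨s, hs, t, ht, rfl⟩ := hS
    exact hzero s t hs ht
  | compl S hS ih =>
    rw [setIntegral_compl hS hf, ih, sub_zero, ← setIntegral_univ, ← Set.univ_prod_univ]
    exact hzero _ _ .univ .univ
  | iUnion S hdisj hS ih =>
    rw [integral_iUnion hS hdisj hf.integrableOn]
    simp only [ih, tsum_zero]

lemma inner_tensorLp_indicatorConstLp [SFinite μ] [SFinite ν] {s : Set α} {t : Set β}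
    (hs : MeasurableSet s) (ht : MeasurableSet t) (hμs : μ s ≠ ∞) (hνt : ν t ≠ ∞)
    (f : Lp ℂ 2 (μ.prod ν)) :
    ⟪tensorLp μ ν (indicatorConstLp 2 hs hμs 1) (indicatorConstLp 2 ht hνt 1), f⟫_ℂ =
      ∫ z in s ×ˢ t, f z ∂μ.prod ν := by
  rw [L2.inner_def, ← integral_indicator (hs.prod ht)]
  apply integral_congr_ae
  filter_upwards [coeFn_tensorLp (indicatorConstLp 2 hs hμs 1) (indicatorConstLp 2 ht hνt 1),
    Measure.quasiMeasurePreserving_fst.ae (indicatorConstLp_coeFn (E := ℂ) (hs := hs) (hμs := hμs)),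
    Measure.quasiMeasurePreserving_snd.ae (indicatorConstLp_coeFn (E := ℂ) (hs := ht) (hμs := hνt))]
    with z h₁ h₂ h₃
  rw [h₁, h₂, h₃]
  by_cases hz₁ : z.1 ∈ s <;> by_cases hz₂ : z.2 ∈ t <;> simp [Set.mem_prod, hz₁, hz₂]

lemma eq_zero_of_forall_inner_tensorLp_eq_zero [SigmaFinite μ] [SigmaFinite ν]
    {f : Lp ℂ 2 (μ.prod ν)} (hf : ∀ u g, ⟪tensorLp μ ν u g, f⟫_ℂ = 0) : f = 0 := by
  have hrect (i j : ℕ) : ∀ᵐ z ∂μ.prod ν, z ∈ spanningSets μ i ×ˢ spanningSets ν j → f z = 0 := by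
    have hA := (measurableSet_spanningSets μ i).prod (measurableSet_spanningSets ν j)
    have hA_top : μ.prod ν (spanningSets μ i ×ˢ spanningSets ν j) ≠ ∞ := by
      rw [Measure.prod_prod]
      exact ENNReal.mul_ne_top (measure_spanningSets_lt_top μ i).ne
        (measure_spanningSets_lt_top ν j).ne
    rw [← ae_restrict_iff' hA]
    refine ae_eq_zero_of_forall_setIntegral_prod_eq_zero
      (integrableOn_Lp_of_measure_ne_top f Fact.out hA_top) fun s t hs ht => ?_
    rw [Measure.restrict_restrict (hs.prod ht), Set.prod_inter_prod,
      ← inner_tensorLp_indicatorConstLp (hs.inter (measurableSet_spanningSets μ i))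
        (ht.inter (measurableSet_spanningSets ν j))
        (measure_ne_top_of_subset Set.inter_subset_right (measure_spanningSets_lt_top μ i).ne)
        (measure_ne_top_of_subset Set.inter_subset_right (measure_spanningSets_lt_top ν j).ne), hf]
  rw [Lp.eq_zero_iff_ae_eq_zero]
  filter_upwards [ae_all_iff.2 fun i => ae_all_iff.2 (hrect i)] with z hz
  exact hz _ _ ⟨mem_spanningSetsIndex μ z.1, mem_spanningSetsIndex ν z.2⟩

variable (μ ν) in
theorem isHilbertTensor_tensorLp [SigmaFinite μ] [SigmaFinite ν] :
    IsHilbertTensor (tensorLp μ ν) where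
  inner_apply u g u' g' :=
    inner_eq_mul_of_ae_eq_mul_prod (coeFn_tensorLp u g) (coeFn_tensorLp u' g')
  dense_span := by
    rw [Submodule.dense_iff_topologicalClosure_eq_top, Submodule.topologicalClosure_eq_top_iff,
      Submodule.eq_bot_iff]
    exact fun f hf => eq_zero_of_forall_inner_tensorLp_eq_zero fun u g =>
      hf _ (Submodule.subset_span ⟨(u, g), rfl⟩)

end TensorLp

section PartialIntegralOperators

variable {α β ι κ : Type*} [MeasurableSpace α] [MeasurableSpace β] {μ : Measure α} {ν : Measure β}

lemma orthonormal_toLp [DecidableEq ι] {φ : ι → α → ℂ} (hφ : ∀ k, MemLp (φ k) 2 μ)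
    (hφ_int : ∀ i j, ∫ x, star (φ i x) * φ j x ∂μ = if i = j then 1 else 0) :
    Orthonormal ℂ fun k => (hφ k).toLp := by
  refine orthonormal_iff_ite.2 fun i j => ?_
  rw [← hφ_int i j, L2.inner_def]
  apply integral_congr_ae
  filter_upwards [(hφ i).coeFn_toLp, (hφ j).coeFn_toLp] with x h₁ h₂
  rw [h₁, h₂, RCLike.inner_apply', RCLike.star_def]

variable [Fintype ι] [Fintype κ]

lemma integral_sum_mul_star_mul {φ : ι → α → ℂ} (hφ : ∀ k, MemLp (φ k) 2 μ) (u : Lp ℂ 2 μ)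
    (γ : ι → ℂ) {f : α → ℂ} {c : ℂ} (hf : f =ᵐ[μ] fun s => u s * c) :
    ∫ s, (∑ k, γ k * star (φ k s)) * f s ∂μ = ∑ k, γ k * (⟪(hφ k).toLp, u⟫_ℂ * c) := by
  have hinner : (fun s => (∑ k, γ k * star (φ k s)) * f s) =ᵐ[μ]
      fun s => ∑ k, γ k * (⟪(hφ k).toLp (φ k) s, u s⟫_ℂ * c) := by
    filter_upwards [hf, ae_all_iff.2 fun k => (hφ k).coeFn_toLp] with s h₁ h₂
    simp only [h₁, h₂, Finset.sum_mul, RCLike.inner_apply', RCLike.star_def, mul_assoc]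
  rw [integral_congr_ae hinner, integral_finsetSum _ fun k _ =>
    ((L2.integrable_inner ((hφ k).toLp) u).mul_const c).const_mul (γ k)]
  simp only [integral_const_mul, integral_mul_const, L2.inner_def]

variable [SFinite μ] [SFinite ν] {T : Lp ℂ 2 (μ.prod ν) →L[ℂ] Lp ℂ 2 (μ.prod ν)}

lemma isPartialIntegralOperator_of_ae_eq_integral_fst {φ : ι → α → ℂ}
    (hφ : ∀ k, MemLp (φ k) 2 μ) {h : ι → β → ℂ} (hh : ∀ k, MemLp (h k) ∞ ν)
    (hT : ∀ f : Lp ℂ 2 (μ.prod ν), ∀ᵐ z ∂μ.prod ν,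
      T f z = ∫ s, (∑ k, φ k z.1 * star (φ k s) * h k z.2) * f (s, z.2) ∂μ) :
    IsPartialIntegralOperator (tensorLp μ ν) (fun k => (hφ k).toLp)
      (fun k => mulCLM 2 (hh k).toLp) T := by
  intro u g
  apply Lp.ext
  have hslice : ∀ᵐ y ∂ν, ∀ᵐ s ∂μ, tensorLp μ ν u g (s, y) = u s * g y :=
    Measure.ae_ae_of_ae_prod
      (Measure.measurePreserving_swap.quasiMeasurePreserving.ae (coeFn_tensorLp u g))
  filter_upwards [hT (tensorLp μ ν u g), Measure.quasiMeasurePreserving_snd.ae hslice,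
    coeFn_sum_smul_tensorLp (fun k => ⟪(hφ k).toLp, u⟫_ℂ) (fun k => (hφ k).toLp)
      (fun k => mulCLM 2 (hh k).toLp g),
    ae_all_iff.2 fun k => Measure.quasiMeasurePreserving_fst.ae (hφ k).coeFn_toLp,
    ae_all_iff.2 fun k => Measure.quasiMeasurePreserving_snd.ae (coeFn_mulCLM_toLp (hh k) g)]
    with z hTz hz hsum h₁ h₂
  simp_rw [hTz, hsum, mul_right_comm (φ _ z.1) (star _)]
  rw [integral_sum_mul_star_mul hφ u _ hz]
  refine Finset.sum_congr rfl fun k _ => ?_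
  rw [h₁, h₂]
  ring

lemma isPartialIntegralOperator_of_ae_eq_integral_snd {ψ : κ → β → ℂ}
    (hψ : ∀ j, MemLp (ψ j) 2 ν) {p : κ → α → ℂ} (hp : ∀ j, MemLp (p j) ∞ μ)
    (hT : ∀ f : Lp ℂ 2 (μ.prod ν), ∀ᵐ z ∂μ.prod ν,
      T f z = ∫ t, (∑ j, p j z.1 * ψ j z.2 * star (ψ j t)) * f (z.1, t) ∂ν) :
    IsPartialIntegralOperator (tensorLp μ ν).flip (fun j => (hψ j).toLp)
      (fun j => mulCLM 2 (hp j).toLp) T := by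
  intro g u
  apply Lp.ext
  have hslice : ∀ᵐ x ∂μ, ∀ᵐ t ∂ν, tensorLp μ ν u g (x, t) = g t * u x := by
    simpa only [mul_comm] using Measure.ae_ae_of_ae_prod (coeFn_tensorLp u g)
  filter_upwards [hT (tensorLp μ ν u g), Measure.quasiMeasurePreserving_fst.ae hslice,
    coeFn_sum_smul_tensorLp (fun j => ⟪(hψ j).toLp, g⟫_ℂ) (fun j => mulCLM 2 (hp j).toLp u)
      (fun j => (hψ j).toLp),
    ae_all_iff.2 fun j => Measure.quasiMeasurePreserving_snd.ae (hψ j).coeFn_toLp,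
    ae_all_iff.2 fun j => Measure.quasiMeasurePreserving_fst.ae (coeFn_mulCLM_toLp (hp j) u)]
    with z hTz hz hsum h₁ h₂
  simp only [ContinuousLinearMap.flip_apply]
  rw [hTz, hsum, integral_sum_mul_star_mul hψ g _ hz]
  refine Finset.sum_congr rfl fun j _ => ?_
  rw [h₁, h₂]
  ring

end PartialIntegralOperators

theorem statement13_general {α β ι κ : Type*} [MeasurableSpace α]
    [MeasurableSpace.CountablySeparated α] [MeasurableSpace β]
    [MeasurableSpace.CountablySeparated β] [Fintype ι] [Fintype κ]
    {μ : Measure α} [SigmaFinite μ] [NullSingletonClass μ] [NeZero μ]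
    {ν : Measure β} [SigmaFinite ν] [NullSingletonClass ν] [NeZero ν]
    {φ : ι → α → ℂ} (hφ : ∀ k, MemLp (φ k) 2 μ) (hφ_on : Orthonormal ℂ fun k => (hφ k).toLp)
    {h : ι → β → ℂ} (hh : ∀ k, MemLp (h k) ∞ ν)
    {ψ : κ → β → ℂ} (hψ : ∀ j, MemLp (ψ j) 2 ν) (hψ_on : Orthonormal ℂ fun j => (hψ j).toLp)
    {p : κ → α → ℂ} (hp : ∀ j, MemLp (p j) ∞ μ)
    {T₁ T₂ : Lp ℂ 2 (μ.prod ν) →L[ℂ] Lp ℂ 2 (μ.prod ν)} [IsStarNormal (T₁ + T₂)]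
    (hT₁ : ∀ f : Lp ℂ 2 (μ.prod ν), ∀ᵐ z ∂μ.prod ν,
      T₁ f z = ∫ s, (∑ k, φ k z.1 * star (φ k s) * h k z.2) * f (s, z.2) ∂μ)
    (hT₂ : ∀ f : Lp ℂ 2 (μ.prod ν), ∀ᵐ z ∂μ.prod ν,
      T₂ f z = ∫ t, (∑ j, p j z.1 * ψ j z.2 * star (ψ j t)) * f (z.1, t) ∂ν) :
    spectrum ℂ T₁ ∪ spectrum ℂ T₂ ⊆ essentialSpectrum (T₁ + T₂) := by
  have hτ := isHilbertTensor_tensorLp μ ν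
  have hT₁ := isPartialIntegralOperator_of_ae_eq_integral_fst hφ hh hT₁
  have hT₂ := isPartialIntegralOperator_of_ae_eq_integral_snd hψ hp hT₂
  have : IsStarNormal (T₂ + T₁) := by rwa [add_comm]
  refine Set.union_subset ?_ ?_
  · exact hT₁.spectrum_subset_essentialSpectrum_add hτ hφ_on hT₂ not_finiteDimensional_Lp
      not_finiteDimensional_Lp fun k _ => isWeylPoint_mulCLM
  · rw [add_comm]
    exact hT₂.spectrum_subset_essentialSpectrum_add hτ.flip hψ_on hT₁ not_finiteDimensional_Lp
      not_finiteDimensional_Lp fun j _ => isWeylPoint_mulCLM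

lemma memLp_top_ofReal_of_ae_abs_le {α : Type*} [MeasurableSpace α] {μ : Measure α} {f : α → ℝ}
    (hf : AEStronglyMeasurable f μ) (hbdd : ∃ C : ℝ, ∀ᵐ x ∂μ, |f x| ≤ C) :
    MemLp (fun x => (f x : ℂ)) ∞ μ :=
  let ⟨C, hC⟩ := hbdd
  (memLp_top_of_bound hf C hC).ofReal

lemma neZero_muI {a b : ℝ} (hab : a < b) : NeZero (muI a b) :=
  ⟨by simpa only [ne_eq, Measure.restrict_eq_zero, Real.volume_Icc, ENNReal.ofReal_eq_zero,
    not_le, sub_pos] using hab⟩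

theorem statement13
    (a b c d : ℝ) (hab : a < b) (hcd : c < d)
    (n : ℕ) (hn : 1 ≤ n)
    (φ : Fin n → ℝ → ℂ)
    (hφL2 : ∀ k, MemLp (φ k) 2 (muI a b))
    (hφON : ∀ i j, ∫ x, star (φ i x) * φ j x ∂(muI a b) = if i = j then 1 else 0)
    (h : Fin n → ℝ → ℝ)
    (hhmeas : ∀ k, Measurable (h k))
    (hhbdd : ∀ k, ∃ C : ℝ, ∀ᵐ y ∂(muI c d), |h k y| ≤ C)
    (m : ℕ) (hm : 1 ≤ m)
    (ψ : Fin m → ℝ → ℂ)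
    (hψL2 : ∀ j, MemLp (ψ j) 2 (muI c d))
    (hψON : ∀ i j, ∫ y, star (ψ i y) * ψ j y ∂(muI c d) = if i = j then 1 else 0)
    (p : Fin m → ℝ → ℝ)
    (hpmeas : ∀ j, Measurable (p j))
    (hpbdd : ∀ j, ∃ C : ℝ, ∀ᵐ x ∂(muI a b), |p j x| ≤ C)
    (T1 T2 : Lp ℂ 2 ((muI a b).prod (muI c d)) →L[ℂ] Lp ℂ 2 ((muI a b).prod (muI c d)))
    (hT1sa : IsSelfAdjoint T1) (hT2sa : IsSelfAdjoint T2)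
    (hT1 : ∀ f : Lp ℂ 2 ((muI a b).prod (muI c d)),
      ∀ᵐ z ∂((muI a b).prod (muI c d)),
        T1 f z = ∫ s, (∑ k, φ k z.1 * star (φ k s) * (h k z.2 : ℂ)) * f (s, z.2) ∂(muI a b))
    (hT2 : ∀ f : Lp ℂ 2 ((muI a b).prod (muI c d)),
      ∀ᵐ z ∂((muI a b).prod (muI c d)),
        T2 f z = ∫ t, (∑ j, (p j z.1 : ℂ) * ψ j z.2 * star (ψ j t)) * f (z.1, t) ∂(muI c d))
    :
    spectrum ℂ T1 ∪ spectrum ℂ T2 ⊆ essentialSpectrum (T1 + T2) := by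
  have := neZero_muI hab
  have := neZero_muI hcd
  have : IsStarNormal (T1 + T2) := (hT1sa.add hT2sa).isStarNormal
  exact statement13_general hφL2 (orthonormal_toLp hφL2 hφON)
    (fun k => memLp_top_ofReal_of_ae_abs_le (hhmeas k).aestronglyMeasurable (hhbdd k))
    hψL2 (orthonormal_toLp hψL2 hψON)
    (fun j => memLp_top_ofReal_of_ae_abs_le (hpmeas j).aestronglyMeasurable (hpbdd j)) hT1 hT2
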